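/- The flow u_{n,τ} = g_n with g_0 = (u_0−1)·( R_1 − R_{−1} ), where R_0 = s1_1 + s1_{−1} − s2_0 − s2_{−1} + s3_0, with s1_0 = u_2u_0u_{−2}(u_1−1)(u_0−1)(u_{−1}−1)/(u_1u_{−1}), s2_0 = u_1u_{−1}(u_1−1)(u_0−1)/u_0, s3_0 = u_1(u_0−1)(u_1u_0−u_1−u_0)u_{−1}²/u_0² − (u_2u_1−u_2−u_1)u_0(u_0−1)/u_1, and where s1_k, s2_k, s3_k, R_k denote k-th shifts, is a generalized symmetry of equation (E6), u̇_n = f_n with f_0 = (u_0−1)·( u_2(u_1−1)u_0/u_1 − u_0(u_{−1}−1)u_{−2}/u_{−1} − u_1 + u_{−1} ); i.e. Σ_{k=−4}^{4} f_k · ∂g_0/∂u_k = Σ_{k=−2}^{2} g_k · ∂f_0/∂u_k holds identically on the open set of (u_{−6},…,u_6) ∈ ℝ^{13} where all u_j ≠ 0. -/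

import Mathlib

open Finset

noncomputable section

/-- The shift operator: `(shift s u) j = u (j + s)`, so that for a lattice
function `F`, `(T^s F) u = F (shift s u)`. -/
def shift (s : ℤ) (u : ℤ → ℝ) : ℤ → ℝ := fun j => u (j + s)

/-- Partial derivative of a lattice function `φ` with respect to the lattice
variable `u_k`, evaluated at the sequence `u`. -/
def pd (φ : (ℤ → ℝ) → ℝ) (k : ℤ) (u : ℤ → ℝ) : ℝ :=
  deriv (fun x => φ (Function.update u k x)) (u k)

/-- `φ` is a smooth function of the lattice variables `u_p, …, u_q` (q ≤ p):
it factors through a smooth function of the `p - q + 1` variables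
`u_q, u_{q+1}, …, u_p`. -/
def SmoothWindow (q p : ℤ) (φ : (ℤ → ℝ) → ℝ) : Prop :=
  ∃ Φ : (Fin ((p - q).toNat + 1) → ℝ) → ℝ, ContDiff ℝ (⊤ : ℕ∞) Φ ∧
    ∀ u : ℤ → ℝ, φ u = Φ (fun i => u (q + (i.val : ℤ)))

/-- The compatibility condition stating that the flow `u_{n,τ} = g_n` is a
generalized symmetry of the equation `u̇_n = f_n`:
`Σ_{k=-4}^{4} f_k ∂g_0/∂u_k = Σ_{k=-2}^{2} g_k ∂f_0/∂u_k` identically on `dom`. -/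
def IsGenSymmetry (f g : (ℤ → ℝ) → ℝ) (dom : (ℤ → ℝ) → Prop) : Prop :=
  ∀ u : ℤ → ℝ, dom u →
    (∑ k ∈ Finset.Icc (-4 : ℤ) 4, f (shift k u) * pd g k u) =
      ∑ k ∈ Finset.Icc (-2 : ℤ) 2, g (shift k u) * pd f k u

/-- Right-hand side of (E6). -/
def fE6 (u : ℤ → ℝ) : ℝ :=
  (u 0 - 1) * (u 2 * (u 1 - 1) * u 0 / u 1
    - u 0 * (u (-1) - 1) * u (-2) / u (-1) - u 1 + u (-1))

/-- `s1_0 = u_2 u_0 u_{-2}(u_1-1)(u_0-1)(u_{-1}-1)/(u_1 u_{-1})`. -/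
def s1E6 (u : ℤ → ℝ) : ℝ :=
  u 2 * u 0 * u (-2) * (u 1 - 1) * (u 0 - 1) * (u (-1) - 1) / (u 1 * u (-1))

/-- `s2_0 = u_1 u_{-1}(u_1-1)(u_0-1)/u_0`. -/
def s2E6 (u : ℤ → ℝ) : ℝ :=
  u 1 * u (-1) * (u 1 - 1) * (u 0 - 1) / u 0

/-- `s3_0 = u_1(u_0-1)(u_1u_0-u_1-u_0)u_{-1}²/u_0² - (u_2u_1-u_2-u_1)u_0(u_0-1)/u_1`. -/
def s3E6 (u : ℤ → ℝ) : ℝ :=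
  u 1 * (u 0 - 1) * (u 1 * u 0 - u 1 - u 0) * (u (-1)) ^ 2 / (u 0) ^ 2
    - (u 2 * u 1 - u 2 - u 1) * u 0 * (u 0 - 1) / u 1

/-- `R_0 = s1_1 + s1_{-1} - s2_0 - s2_{-1} + s3_0`. -/
def RE6 (u : ℤ → ℝ) : ℝ :=
  s1E6 (shift 1 u) + s1E6 (shift (-1) u) - s2E6 u - s2E6 (shift (-1) u) + s3E6 u

/-- Generalized symmetry of (E6): `g_0 = (u_0 - 1)(R_1 - R_{-1})`. -/
def gE6 (u : ℤ → ℝ) : ℝ :=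
  (u 0 - 1) * (RE6 (shift 1 u) - RE6 (shift (-1) u))

/-! Equation (E6) has the same shape as the flow `gE6`: with
`a_0 = u_1 (u_0 - 1) u_{-1} / u_0 - u_0` one has `f_0 = (u_0 - 1)(a_1 - a_{-1})`, to be compared
with `g_0 = (u_0 - 1)(R_1 - R_{-1})`. Writing `D_f`, `D_g` for the derivations of lattice functions
given by the two flows, the Leibniz rule yields

`D_f g_0 - D_g f_0 = (u_0 - 1) ((D_f R_1 - D_g a_1) - (D_f R_{-1} - D_g a_{-1}))`,

since the terms `f_0 (R_1 - R_{-1})` and `g_0 (a_1 - a_{-1})` coincide. Both derivations commute with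
the shift, so everything reduces to `D_f R_0 = D_g a_0` (`dR_eq_dA`), a rational-function identity
in `u_{-5}, …, u_5` that is verified by clearing denominators.

The sums of partial derivatives in the statement are identified with the derivations through the
predicate `HasAlong`, which is stable under the usual rules of differentiation. -/

/-! ### Directional derivatives of lattice functions -/

/-- `φ` is differentiable at `u` in each lattice variable separately, and its derivative in the
direction `h`, with only the variables indexed by `S` taken into account, is `d`. -/
def HasAlong (S : Finset ℤ) (h u : ℤ → ℝ) (φ : (ℤ → ℝ) → ℝ) (d : ℝ) : Prop :=
  (∀ k, DifferentiableAt ℝ (fun x => φ (Function.update u k x)) (u k)) ∧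
    ∑ k ∈ S, h k * pd φ k u = d

namespace HasAlong

variable {S : Finset ℤ} {h u : ℤ → ℝ} {φ ψ : (ℤ → ℝ) → ℝ} {d e : ℝ}

lemma congr_val (hφ : HasAlong S h u φ d) (hde : d = e) : HasAlong S h u φ e := hde ▸ hφ

lemma const (c : ℝ) : HasAlong S h u (fun _ => c) 0 :=
  ⟨fun _ => differentiableAt_const _, by simp [pd]⟩

lemma coord {j : ℤ} (hj : j ∈ S) : HasAlong S h u (fun v => v j) (h j) := by
  have key : ∀ k, HasDerivAt (fun x => Function.update u k x j) (if k = j then 1 else 0) (u k) := by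
    intro k
    by_cases hk : k = j
    · subst hk
      simpa using hasDerivAt_id' (u k)
    · simpa [hk, Function.update_of_ne (Ne.symm hk)] using hasDerivAt_const (u k) (u j)
  refine ⟨fun k => (key k).differentiableAt, ?_⟩
  simp [pd, (key _).deriv, hj]

lemma add (hφ : HasAlong S h u φ d) (hψ : HasAlong S h u ψ e) :
    HasAlong S h u (fun v => φ v + ψ v) (d + e) := by
  refine ⟨fun k => (hφ.1 k).add (hψ.1 k), ?_⟩
  rw [← hφ.2, ← hψ.2, ← Finset.sum_add_distrib]
  refine Finset.sum_congr rfl fun k _ => ?_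
  have := ((hφ.1 k).hasDerivAt.add (hψ.1 k).hasDerivAt).deriv
  simp only [pd] at this ⊢
  erw [this]
  ring

lemma sub (hφ : HasAlong S h u φ d) (hψ : HasAlong S h u ψ e) :
    HasAlong S h u (fun v => φ v - ψ v) (d - e) := by
  refine ⟨fun k => (hφ.1 k).sub (hψ.1 k), ?_⟩
  rw [← hφ.2, ← hψ.2, ← Finset.sum_sub_distrib]
  refine Finset.sum_congr rfl fun k _ => ?_
  have := ((hφ.1 k).hasDerivAt.sub (hψ.1 k).hasDerivAt).deriv
  simp only [pd] at this ⊢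
  erw [this]
  ring

lemma mul (hφ : HasAlong S h u φ d) (hψ : HasAlong S h u ψ e) :
    HasAlong S h u (fun v => φ v * ψ v) (d * ψ u + φ u * e) := by
  refine ⟨fun k => (hφ.1 k).mul (hψ.1 k), ?_⟩
  rw [← hφ.2, ← hψ.2, Finset.sum_mul, Finset.mul_sum, ← Finset.sum_add_distrib]
  refine Finset.sum_congr rfl fun k _ => ?_
  have := ((hφ.1 k).hasDerivAt.mul (hψ.1 k).hasDerivAt).deriv
  simp only [pd, Function.update_eq_self] at this ⊢
  erw [this]
  ring

lemma div (hφ : HasAlong S h u φ d) (hψ : HasAlong S h u ψ e) (h0 : ψ u ≠ 0) :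
    HasAlong S h u (fun v => φ v / ψ v) ((d * ψ u - φ u * e) / ψ u ^ 2) := by
  have h0' : ∀ k, ψ (Function.update u k (u k)) ≠ 0 := fun k => by
    rwa [Function.update_eq_self]
  refine ⟨fun k => (hφ.1 k).div (hψ.1 k) (h0' k), ?_⟩
  rw [← hφ.2, ← hψ.2, Finset.sum_mul, Finset.mul_sum, ← Finset.sum_sub_distrib, Finset.sum_div]
  refine Finset.sum_congr rfl fun k _ => ?_
  have := ((hφ.1 k).hasDerivAt.div (hψ.1 k).hasDerivAt (h0' k)).deriv
  simp only [pd, Function.update_eq_self] at this ⊢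
  erw [this]
  ring

lemma sq (hφ : HasAlong S h u φ d) : HasAlong S h u (fun v => φ v ^ 2) (2 * φ u * d) := by
  simpa only [pow_two] using (hφ.mul hφ).congr_val (by ring)

end HasAlong

/-! ### Differentials of the potentials -/

/-- The potential `a_0 = u_1 (u_0 - 1) u_{-1} / u_0 - u_0` of (E6). -/
def aE6 (u : ℤ → ℝ) : ℝ := u 1 * (u 0 - 1) * u (-1) / u 0 - u 0

lemma fE6_eq (u : ℤ → ℝ) (hu : ∀ j, u j ≠ 0) :
    fE6 u = (u 0 - 1) * (aE6 (shift 1 u) - aE6 (shift (-1) u)) := by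
  have h1 := hu 1
  have h2 := hu (-1)
  norm_num [fE6, aE6, shift, -mul_eq_mul_left_iff]
  field_simp
  ring

/-- The differential of `aE6` at `u` in the direction `h`. -/
def dA (h u : ℤ → ℝ) : ℝ :=
  (u 0 - 1) * u (-1) / u 0 * h 1 + u 1 * (u 0 - 1) / u 0 * h (-1)
    + (u 1 * u (-1) / u 0 ^ 2 - 1) * h 0

/-- The differential of `s1E6` at `u` in the direction `h`. -/
def dS1 (h u : ℤ → ℝ) : ℝ :=
  u 0 * u (-2) * (u 1 - 1) * (u 0 - 1) * (u (-1) - 1) / (u 1 * u (-1)) * h 2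
    + u 2 * u 0 * (u 1 - 1) * (u 0 - 1) * (u (-1) - 1) / (u 1 * u (-1)) * h (-2)
    + u 2 * u (-2) * (u 1 - 1) * (2 * u 0 - 1) * (u (-1) - 1) / (u 1 * u (-1)) * h 0
    + u 2 * u 0 * u (-2) * (u 0 - 1) * (u (-1) - 1) / (u 1 ^ 2 * u (-1)) * h 1
    + u 2 * u 0 * u (-2) * (u 1 - 1) * (u 0 - 1) / (u 1 * u (-1) ^ 2) * h (-1)

/-- The differential of `s2E6` at `u` in the direction `h`. -/
def dS2 (h u : ℤ → ℝ) : ℝ :=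
  (2 * u 1 - 1) * u (-1) * (u 0 - 1) / u 0 * h 1
    + u 1 * (u 1 - 1) * (u 0 - 1) / u 0 * h (-1)
    + u 1 * u (-1) * (u 1 - 1) / u 0 ^ 2 * h 0

/-- The differential of `s3E6` at `u` in the direction `h`. -/
def dS3 (h u : ℤ → ℝ) : ℝ :=
  -((u 1 - 1) * u 0 * (u 0 - 1) / u 1) * h 2
    + ((u 0 - 1) * (2 * u 1 * u 0 - 2 * u 1 - u 0) * u (-1) ^ 2 / u 0 ^ 2
        - u 2 * u 0 * (u 0 - 1) / u 1 ^ 2) * h 1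
    + u 1 * (u 0 - 1) * (u 1 * u 0 - u 1 - u 0) * (2 * u (-1)) / u 0 ^ 2 * h (-1)
    + (2 * u 1 ^ 2 * u (-1) ^ 2 * (u 0 - 1) / u 0 ^ 3 - u 1 * u (-1) ^ 2 / u 0 ^ 2
        - (u 2 * u 1 - u 2 - u 1) * (2 * u 0 - 1) / u 1) * h 0

/-- The differential of `RE6` at `u` in the direction `h`. -/
def dR (h u : ℤ → ℝ) : ℝ :=
  dS1 (shift 1 h) (shift 1 u) + dS1 (shift (-1) h) (shift (-1) u) - dS2 h u
    - dS2 (shift (-1) h) (shift (-1) u) + dS3 h u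

lemma shift_zero (u : ℤ → ℝ) : shift 0 u = u := by
  funext j; simp [shift]

lemma shift_shift (s t : ℤ) (u : ℤ → ℝ) : shift s (shift t u) = shift (s + t) u := by
  funext j; simp [shift, add_assoc]

/-- A field of lattice functions `k ↦ φ (shift k u)` is shift-equivariant. -/
lemma shift_field (φ : (ℤ → ℝ) → ℝ) (m : ℤ) (u : ℤ → ℝ) :
    shift m (fun k => φ (shift k u)) = fun k => φ (shift k (shift m u)) := by
  funext k; simp [shift_shift, shift]

section Along

variable {S : Finset ℤ} {h u : ℤ → ℝ} (s : ℤ)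

lemma hasAlong_aE6 (hu : ∀ j, u j ≠ 0) (hS : Finset.Icc (s - 1) (s + 1) ⊆ S) :
    HasAlong S h u (fun v => aE6 (shift s v)) (dA (shift s h) (shift s u)) := by
  have c : ∀ j, -1 ≤ j → j ≤ 1 → HasAlong S h u (fun v => shift s v j) (shift s h j) :=
    fun j _ _ => .coord (hS (Finset.mem_Icc.2 ⟨by lia, by lia⟩))
  have c1 := c 1 (by simp) (by simp)
  have c0 := c 0 (by simp) (by simp)
  have c1' := c (-1) (by simp) (by simp)
  have h0 : shift s u 0 ≠ 0 := hu _
  refine ((((c1.mul (c0.sub (.const 1))).mul c1').div c0 h0).sub c0).congr_val ?_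
  simp only [dA]
  field_simp
  ring

lemma hasAlong_s1E6 (hu : ∀ j, u j ≠ 0) (hS : Finset.Icc (s - 2) (s + 2) ⊆ S) :
    HasAlong S h u (fun v => s1E6 (shift s v)) (dS1 (shift s h) (shift s u)) := by
  have c : ∀ j, -2 ≤ j → j ≤ 2 → HasAlong S h u (fun v => shift s v j) (shift s h j) :=
    fun j _ _ => .coord (hS (Finset.mem_Icc.2 ⟨by lia, by lia⟩))
  have c2 := c 2 (by simp) (by simp)
  have c1 := c 1 (by simp) (by simp)
  have c0 := c 0 (by simp) (by simp)
  have c1' := c (-1) (by simp) (by simp)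
  have c2' := c (-2) (by simp) (by simp)
  have h1 : shift s u 1 ≠ 0 := hu _
  have h1' : shift s u (-1) ≠ 0 := hu _
  refine ((((((c2.mul c0).mul c2').mul (c1.sub (.const 1))).mul (c0.sub (.const 1))).mul
    (c1'.sub (.const 1))).div (c1.mul c1') (mul_ne_zero h1 h1')).congr_val ?_
  simp only [dS1]
  field_simp
  ring

lemma hasAlong_s2E6 (hu : ∀ j, u j ≠ 0) (hS : Finset.Icc (s - 1) (s + 1) ⊆ S) :
    HasAlong S h u (fun v => s2E6 (shift s v)) (dS2 (shift s h) (shift s u)) := by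
  have c : ∀ j, -1 ≤ j → j ≤ 1 → HasAlong S h u (fun v => shift s v j) (shift s h j) :=
    fun j _ _ => .coord (hS (Finset.mem_Icc.2 ⟨by lia, by lia⟩))
  have c1 := c 1 (by simp) (by simp)
  have c0 := c 0 (by simp) (by simp)
  have c1' := c (-1) (by simp) (by simp)
  have h0 : shift s u 0 ≠ 0 := hu _
  refine ((((c1.mul c1').mul (c1.sub (.const 1))).mul (c0.sub (.const 1))).div c0
    h0).congr_val ?_
  simp only [dS2]
  field_simp
  ring

lemma hasAlong_s3E6 (hu : ∀ j, u j ≠ 0) (hS : Finset.Icc (s - 1) (s + 2) ⊆ S) :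
    HasAlong S h u (fun v => s3E6 (shift s v)) (dS3 (shift s h) (shift s u)) := by
  have c : ∀ j, -1 ≤ j → j ≤ 2 → HasAlong S h u (fun v => shift s v j) (shift s h j) :=
    fun j _ _ => .coord (hS (Finset.mem_Icc.2 ⟨by lia, by lia⟩))
  have c2 := c 2 (by simp) (by simp)
  have c1 := c 1 (by simp) (by simp)
  have c0 := c 0 (by simp) (by simp)
  have c1' := c (-1) (by simp) (by simp)
  have h0 : shift s u 0 ≠ 0 := hu _
  have h1 : shift s u 1 ≠ 0 := hu _
  refine (((((c1.mul (c0.sub (.const 1))).mul (((c1.mul c0).sub c1).sub c0)).mul c1'.sq).div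
    c0.sq (pow_ne_zero 2 h0)).sub (((((((c2.mul c1).sub c2).sub c1).mul c0).mul
    (c0.sub (.const 1)))).div c1 h1)).congr_val ?_
  simp only [dS3]
  field_simp
  ring

lemma hasAlong_RE6 (hu : ∀ j, u j ≠ 0) (hS : Finset.Icc (s - 3) (s + 3) ⊆ S) :
    HasAlong S h u (fun v => RE6 (shift s v)) (dR (shift s h) (shift s u)) := by
  have sub : ∀ p q : ℤ, s - 3 ≤ p → q ≤ s + 3 → Finset.Icc p q ⊆ S :=
    fun p q hp hq => (Finset.Icc_subset_Icc hp hq).trans hS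
  simp only [RE6, dR, shift_shift]
  exact ((((hasAlong_s1E6 (1 + s) hu (sub _ _ (by lia) (by lia))).add
    (hasAlong_s1E6 (-1 + s) hu (sub _ _ (by lia) (by lia)))).sub
    (hasAlong_s2E6 s hu (sub _ _ (by lia) (by lia)))).sub
    (hasAlong_s2E6 (-1 + s) hu (sub _ _ (by lia) (by lia)))).add
    (hasAlong_s3E6 s hu (sub _ _ (by lia) (by lia)))

end Along

/-! ### The compatibility condition -/

set_option maxHeartbeats 4000000 in
/-- The identity `D_f R_0 = D_g a_0` behind the symmetry. -/
lemma dR_eq_dA (u : ℤ → ℝ) (hu : ∀ j, u j ≠ 0) :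
    dR (fun k => fE6 (shift k u)) u = dA (fun k => gE6 (shift k u)) u := by
  have hf : ∀ k, fE6 (shift k u)
      = (shift k u 0 - 1) * (aE6 (shift 1 (shift k u)) - aE6 (shift (-1) (shift k u))) :=
    fun k => fE6_eq _ fun j => hu _
  simp only [hf]
  norm_num [dR, dS1, dS2, dS3, dA, gE6, RE6, s1E6, s2E6, s3E6, aE6, shift, -mul_eq_mul_left_iff]
  have h4 := hu 4
  have h3 := hu 3
  have h2 := hu 2
  have h1 := hu 1
  have h0 := hu 0
  have h1' := hu (-1)
  have h2' := hu (-2)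
  have h3' := hu (-3)
  have h4' := hu (-4)
  generalize u 5 = x5 at *
  generalize u 4 = x4 at *
  generalize u 3 = x3 at *
  generalize u 2 = x2 at *
  generalize u 1 = x1 at *
  generalize u 0 = x0 at *
  generalize u (-1) = y1 at *
  generalize u (-2) = y2 at *
  generalize u (-3) = y3 at *
  generalize u (-4) = y4 at *
  generalize u (-5) = y5 at *
  field_simp
  ring

/-- the flow `gE6` is a generalized symmetry of (E6) on the
open set where all `u_j ≠ 0`. -/
theorem E6_gen_symmetry :
    IsGenSymmetry fE6 gE6 (fun u => ∀ j : ℤ, u j ≠ 0) := by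
  intro u hu
  set F : ℤ → ℝ := fun k => fE6 (shift k u) with hF
  set G : ℤ → ℝ := fun k => gE6 (shift k u) with hG
  have key : ∀ m, dR (shift m F) (shift m u) = dA (shift m G) (shift m u) := fun m => by
    rw [hF, hG, shift_field, shift_field]
    exact dR_eq_dA _ fun j => hu _
  have hg : HasAlong (Finset.Icc (-4) 4) F u gE6 _ :=
    ((HasAlong.coord (j := 0) (by simp)).sub (.const 1)).mul
      ((hasAlong_RE6 1 hu (Finset.Icc_subset_Icc (by simp) (by simp))).sub
        (hasAlong_RE6 (-1) hu (Finset.Icc_subset_Icc (by simp) (by simp))))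
  have hf : HasAlong (Finset.Icc (-2) 2) G u
      (fun v => (v 0 - 1) * (aE6 (shift 1 v) - aE6 (shift (-1) v))) _ :=
    ((HasAlong.coord (j := 0) (by simp)).sub (.const 1)).mul
      ((hasAlong_aE6 1 hu (Finset.Icc_subset_Icc (by simp) (by simp))).sub
        (hasAlong_aE6 (-1) hu (Finset.Icc_subset_Icc (by simp) (by simp))))
  -- `fE6_eq` holds only off the zeros of the variables, hence near `u k` in each variable `x`.
  have hpd : ∀ k, pd fE6 k u =
      pd (fun v => (v 0 - 1) * (aE6 (shift 1 v) - aE6 (shift (-1) v))) k u := by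
    intro k
    refine Filter.EventuallyEq.deriv_eq ?_
    filter_upwards [isOpen_ne.mem_nhds (hu k)] with x hx
    refine fE6_eq _ fun j => ?_
    by_cases hj : j = k
    · subst hj
      simpa using hx
    · simpa [Function.update_of_ne hj] using hu j
  simp only [hpd]
  refine hg.2.trans (Eq.trans ?_ hf.2.symm)
  have hF0 : F 0 = (u 0 - 1) * (aE6 (shift 1 u) - aE6 (shift (-1) u)) := by
    simp only [hF, shift_zero, fE6_eq u hu]
  have hG0 : G 0 = (u 0 - 1) * (RE6 (shift 1 u) - RE6 (shift (-1) u)) := by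
    simp only [hG, shift_zero, gE6]
  rw [key, key, hF0, hG0]
  ring
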